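/- Assume (Σ_n, T, (φ_n)) satisfies property (H*) with Hölder parameter r. Then for every k ∈ ℕ₀ and every r-Hölder continuous function f_k : Σ_k → ℝ, with l_k := n_k + m_{k+n_k}, one has D̄_{k+l_k}(ℒ^{l_k}_k(f_k)) ≤ t_k · D̄_k(f_k), where t_k := max{β, 1 − (1 − r^{n_k} α_k) C_{k+n_k}/B_{k+n_k}} ∈ (0,1). -/

import Mathlib

open MeasureTheory Real Filter

namespace NSShift

/-- The ambient sequence space `ℕ^ℕ`. -/
abbrev Seq := ℕ → ℕ

/-- The shift map `T`. -/
def shift (x : Seq) : Seq := fun i => x (i + 1)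

/-- Prepend one symbol to a sequence. -/
def cons (a : ℕ) (x : Seq) : Seq := fun i =>
  match i with
  | 0 => a
  | j + 1 => x j

/-- The non-stationary shift space `Σ_n` determined by alphabets `W` and
transition relations `A` (`A n i j` means `α^n_{ij} = 1`). -/
def Sig (W : ℕ → Set ℕ) (A : ℕ → ℕ → ℕ → Prop) (n : ℕ) : Set Seq :=
  {x | (∀ i, x i ∈ W (n + i)) ∧ ∀ i, A (n + i) (x i) (x (i + 1))}

/-- `x` and `y` agree in their first `k` coordinates (lie in a common `k`-cylinder). -/
def agrees (x y : Seq) (k : ℕ) : Prop := ∀ i < k, x i = y i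

open scoped Classical in
/-- The shift metric `d_r(x,y) = r^{min{i : x_i ≠ y_i}}`. -/
noncomputable def dr (r : ℝ) (x y : Seq) : ℝ :=
  if x = y then 0 else r ^ sInf {i | x i ≠ y i}

/-- `f` is locally `(r,m)`-Hölder continuous with Hölder constant `κ` of index `m` on `S`:
`V_k(f) ≤ κ r^k` for all `k ≥ m`. -/
def HolderOn (S : Set Seq) (r κ : ℝ) (m : ℕ) (f : Seq → ℝ) : Prop :=
  ∀ k, m ≤ k → ∀ x ∈ S, ∀ y ∈ S, agrees x y k → |f x - f y| ≤ κ * r ^ k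

/-- The Birkhoff sum `S_n(φ_k) = Σ_{i=0}^{n-1} φ_{k+i} ∘ T^i`. -/
noncomputable def birkhoff (φ : ℕ → Seq → ℝ) (k n : ℕ) (x : Seq) : ℝ :=
  ∑ i ∈ Finset.range n, φ (k + i) (shift^[i] x)

/-- `log B_m = Σ_{i=1}^{m} κ_{m−i} r^i`. -/
noncomputable def logB (κ : ℕ → ℝ) (r : ℝ) (m : ℕ) : ℝ :=
  ∑ i ∈ Finset.Icc 1 m, κ (m - i) * r ^ i

/-- `B_m = exp Σ_{i=1}^{m} κ_{m−i} r^i`. -/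
noncomputable def Bconst (κ : ℕ → ℝ) (r : ℝ) (m : ℕ) : ℝ := Real.exp (logB κ r m)


open scoped Classical in
/-- The Ruelle operator `ℒ_k(f)(x) = Σ_{Ty=x} e^{φ_k(y)} f(y)`, for `x ∈ Σ_{k+1}`. -/
noncomputable def Ruelle (W : ℕ → Set ℕ) (A : ℕ → ℕ → ℕ → Prop) (φ : ℕ → Seq → ℝ)
    (k : ℕ) (f : Seq → ℝ) (x : Seq) : ℝ :=
  ∑' a : ℕ, if cons a x ∈ Sig W A k then Real.exp (φ k (cons a x)) * f (cons a x) else 0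

/-- The iterated Ruelle operator `ℒ^n_k = ℒ_{k+n-1} ∘ ⋯ ∘ ℒ_k`. -/
noncomputable def RuelleIter (W : ℕ → Set ℕ) (A : ℕ → ℕ → ℕ → Prop) (φ : ℕ → Seq → ℝ)
    (k : ℕ) : ℕ → (Seq → ℝ) → Seq → ℝ
  | 0 => fun f => f
  | n + 1 => fun f => Ruelle W A φ (k + n) (RuelleIter W A φ k n f)

/-- `w` is a `k`-admissible word of length `len`. -/
def Adm (W : ℕ → Set ℕ) (A : ℕ → ℕ → ℕ → Prop) (k : ℕ) (w : ℕ → ℕ) (len : ℕ) : Prop :=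
  (∀ i < len, w i ∈ W (k + i)) ∧ ∀ i, i + 1 < len → A (k + i) (w i) (w (i + 1))

/-- Prepend the first `len` symbols of `w` to the sequence `x` (the inverse branch `τ_w`). -/
def prepend (w : ℕ → ℕ) (len : ℕ) (x : Seq) : Seq := fun i =>
  if i < len then w i else x (i - len)

/-- The Lipschitz constant of `f` on `S` with respect to the distance function `d`,
as the least constant `K ≥ 0` with `|f x − f y| ≤ K d(x,y)` on `S`. -/
noncomputable def LipC (S : Set Seq) (d : Seq → Seq → ℝ) (f : Seq → ℝ) : ℝ :=
  sInf {K : ℝ | 0 ≤ K ∧ ∀ x ∈ S, ∀ y ∈ S, |f x - f y| ≤ K * d x y}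

/-- The Vasershtein (Wasserstein) distance of two Borel measures with respect to the
cost function `d`, as the infimum of `∫ d dm` over couplings `m`. -/
noncomputable def Wass (d : Seq → Seq → ℝ) (μ ν : Measure Seq) : ℝ :=
  sInf {t : ℝ | ∃ m : Measure (Seq × Seq),
    m.map Prod.fst = μ ∧ m.map Prod.snd = ν ∧ t = ∫ p, d p.1 p.2 ∂m}

/-- The dual Ruelle operator `ℒ^*_k` on Borel measures, satisfying
`∫ f d(ℒ^*_k μ) = ∫ ℒ_k(f) dμ`. -/
noncomputable def dualRuelle (W : ℕ → Set ℕ) (A : ℕ → ℕ → ℕ → Prop) (φ : ℕ → Seq → ℝ)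
    (k : ℕ) (μ : Measure Seq) : Measure Seq :=
  Measure.sum fun a : ℕ =>
    (μ.withDensity fun x =>
      ENNReal.ofReal ((Sig W A k).indicator (fun y => Real.exp (φ k y)) (cons a x))).map (cons a)

/-- The iterated dual operator `(ℒ^n_k)^* = ℒ^*_k ∘ ⋯ ∘ ℒ^*_{k+n-1}`. -/
noncomputable def dualRuelleIter (W : ℕ → Set ℕ) (A : ℕ → ℕ → ℕ → Prop) (φ : ℕ → Seq → ℝ) :
    (k : ℕ) → ℕ → Measure Seq → Measure Seq
  | _, 0, μ => μ
  | k, n + 1, μ => dualRuelle W A φ k (dualRuelleIter W A φ (k + 1) n μ)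

/-- A non-stationary shift space `((Σ_n), T, (φ_n))` satisfying property `(H*)`, together
with the choices of the constants `β`, `n_k`, base letters `o_k`, mixing times `m_k`,
connecting words `u(x)` and lower bounds `C_k` used in the coupling construction. -/
structure HstarSystem where
  /-- the alphabets `𝒲¹_n` -/
  W : ℕ → Set ℕ
  /-- the transition matrices: `A n i j` iff `α^n_{ij} = 1` -/
  A : ℕ → ℕ → ℕ → Prop
  /-- the potentials `φ_n : Σ_n → ℝ` -/
  φ : ℕ → Seq → ℝ
  /-- the Hölder parameter -/
  r : ℝ
  /-- the parameter `β ∈ (0,1)` -/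
  β : ℝ
  /-- the Hölder constants `κ_n` of `φ_n` -/
  κ : ℕ → ℝ
  /-- the finite set `ℐ` from the big preimages property -/
  I : Finset ℕ
  /-- the infinite set `𝒦` from the big preimages property -/
  K : Set ℕ
  /-- the base letters `o_k ∈ 𝒲¹_k` -/
  o : ℕ → ℕ
  /-- the integers `n_k` -/
  nseq : ℕ → ℕ
  /-- the mixing times `m_k` -/
  mseq : ℕ → ℕ
  /-- the connecting words `u(x) ∈ 𝒲^{m_k}_k` (as sequences; only the first `m_k`
  symbols are relevant) -/
  u : ℕ → Seq → Seq
  /-- the constants `C_k` -/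
  Cseq : ℕ → ℝ
  hr : 0 < r ∧ r < 1
  hβ : 0 < β ∧ β < 1
  κnonneg : ∀ n, 0 ≤ κ n
  hKinf : K.Infinite
  /-- no zero rows -/
  row : ∀ n, ∀ i ∈ W n, ∃ j ∈ W (n + 1), A n i j
  /-- no zero columns -/
  col : ∀ n, ∀ i ∈ W (n + 1), ∃ j ∈ W n, A n j i
  /-- topological mixing -/
  mixing : ∀ k : ℕ, ∀ a ∈ W k, ∀ b : ℕ, ∃ N : ℕ, ∀ n, N ≤ n → b ∈ W (k + n) →
    ∃ x ∈ Sig W A k, x 0 = a ∧ x n = b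
  /-- big preimages along `𝒦` -/
  bigPre : ∀ n ∈ K, 1 ≤ n → ∀ a ∈ W n, ∃ b ∈ I, (b : ℕ) ∈ W (n - 1) ∧ A (n - 1) b a
  /-- `ℒ_n(1) = 1` -/
  normalized : ∀ k, ∀ x ∈ Sig W A (k + 1), Ruelle W A φ k (fun _ => 1) x = 1
  /-- `φ_n` is locally `(r,2)`-Hölder for `n ∉ 𝒦` -/
  holder2 : ∀ n ∉ K, HolderOn (Sig W A n) r (κ n) 2 (φ n)
  /-- `φ_n` is locally `(r,1)`-Hölder for `n ∈ 𝒦` -/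
  holder1 : ∀ n ∈ K, HolderOn (Sig W A n) r (κ n) 1 (φ n)
  ho : ∀ k, o k ∈ W k
  /-- `n_k ≥ ⌊−log α_k / log r⌋ + 1` where `α_k = B_k/β` -/
  hn : ∀ k, (⌊-Real.log (Bconst κ r k / β) / Real.log r⌋ + 1 : ℤ) ≤ (nseq k : ℤ)
  /-- `m_k ≥ 1`, `k + m_k ∈ 𝒦` -/
  hm_mem : ∀ k, 1 ≤ mseq k ∧ k + mseq k ∈ K
  /-- `(A_k ⋯ A_{k+m_k−2})_{o_k j} ≥ 1` for all `j ∈ ℐ ∩ 𝒲¹_{k+m_k−1}` -/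
  hm_conn : ∀ k, ∀ j ∈ I, (j : ℕ) ∈ W (k + mseq k - 1) →
    ∃ w : ℕ → ℕ, Adm W A k w (mseq k) ∧ w 0 = o k ∧ w (mseq k - 1) = j
  /-- minimality of `m_k` -/
  hm_min : ∀ k n, (1 ≤ n ∧ k + n ∈ K ∧ ∀ j ∈ I, (j : ℕ) ∈ W (k + n - 1) →
      ∃ w : ℕ → ℕ, Adm W A k w n ∧ w 0 = o k ∧ w (n - 1) = j) → mseq k ≤ n
  /-- the connecting word `u(x)` starts at `o_k`, ends in `ℐ`, and
  `x ∈ T^{m_k}([u(x)]_k)` -/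
  hu : ∀ k, ∀ x ∈ Sig W A (k + mseq k), prepend (u k x) (mseq k) x ∈ Sig W A k ∧
    u k x 0 = o k ∧ u k x (mseq k - 1) ∈ I
  hC_pos : ∀ k, 0 < Cseq k
  /-- `C_k` is a lower bound for `e^{S_{m_k} φ_k (τ_{u(x)} x)}` -/
  hC_le : ∀ k, ∀ x ∈ Sig W A (k + mseq k),
    Cseq k ≤ Real.exp (birkhoff φ k (mseq k) (prepend (u k x) (mseq k) x))

namespace HstarSystem

variable (S : HstarSystem)

/-- `α_k := B_k / β`. -/
noncomputable def alphaC (k : ℕ) : ℝ := Bconst S.κ S.r k / S.β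

/-- the metric `d̄_k(x,y) := min{1, α_k d_r(x,y)}`. -/
noncomputable def dbar (k : ℕ) (x y : Seq) : ℝ := min 1 (S.alphaC k * dr S.r x y)

/-- `s_k := 1 − (1 − r^{n_k} α_k) C_{k+n_k}/B_{k+n_k}`. -/
noncomputable def sconst (k : ℕ) : ℝ :=
  1 - (1 - S.r ^ S.nseq k * S.alphaC k) * S.Cseq (k + S.nseq k) / Bconst S.κ S.r (k + S.nseq k)

/-- `t_k := max{β, s_k}`. -/
noncomputable def tconst (k : ℕ) : ℝ := max S.β (S.sconst k)

/-- `l_k := n_k + m_{k+n_k}`. -/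
def lconst (k : ℕ) : ℕ := S.nseq k + S.mseq (k + S.nseq k)

end HstarSystem

/-!
By normalization `ℒ_k f (x)` is an average of `f` over the preimages of `x`. If `x` and `y` agree on
`j ≥ 1` letters, their preimages correspond letter by letter, and the weights are comparable up to
the factor `exp (-κ_k r^{j+1})`. Couple this share of the mass along equal letters: the shares of
successive steps multiply to `exp (-logB_{k+n} r^j)`, because `logB_{m+1} = r (κ_m + logB_m)`.

If `d̄(x, y) < 1`, then `x` and `y` share their first letter, and this estimate yields the factor
`β`. If `d̄(x, y) = 1`, first route a share `C` of the mass of `x` and of `y` through the words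
`u(x)` and `u(y)`. The two branches start with the same letter `o`, so the estimate applies to them
for the remaining `n` steps; this yields the other factor.
-/

open Set

section Coupling

lemma exists_mapsTo_Icc_of_forall_sub_le {X : Type*} {s : Set X} {f : X → ℝ} {L : ℝ}
    (h : ∀ x ∈ s, ∀ y ∈ s, f x - f y ≤ L) : ∃ lo, MapsTo f s (Icc lo (lo + L)) := by
  have hbdd : ∀ x ∈ s, f x - L ∈ lowerBounds (f '' s) := by
    rintro x hx _ ⟨y, hy, rfl⟩
    linarith [h x hx y hy]
  refine ⟨sInf (f '' s), fun x hx => ⟨csInf_le ⟨_, hbdd x hx⟩ (mem_image_of_mem f hx), ?_⟩⟩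
  linarith [le_csInf ⟨_, mem_image_of_mem f hx⟩ (hbdd x hx)]

/-- The mass `c * q` common to `p` and `q` is coupled along the diagonal, where the costs differ by
at most `D`; the remaining mass `1 - c` is coupled arbitrarily. -/
lemma hasSum_sub_le_of_mul_le {ι : Type*} {p q f g : ι → ℝ} {F G c lo hi D : ℝ}
    (hp : HasSum p 1) (hq : HasSum q 1) (hq0 : ∀ a, 0 ≤ q a)
    (hc0 : 0 ≤ c) (hqp : ∀ a, c * q a ≤ p a)
    (hF : HasSum (fun a => p a * f a) F) (hG : HasSum (fun a => q a * g a) G)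
    (hf : ∀ a, p a ≠ 0 → f a ≤ hi) (hg : ∀ a, q a ≠ 0 → lo ≤ g a)
    (hfg : ∀ a, p a ≠ 0 → q a ≠ 0 → f a - g a ≤ D) :
    F - G ≤ (1 - c) * (hi - lo) + c * D := by
  have hc1 : c ≤ 1 := by simpa using hasSum_le hqp (hq.mul_left c) hp
  have hterm (a : ι) : p a * f a - q a * g a ≤
      (p a - c * q a) * hi + c * q a * D - (1 - c) * q a * lo := by
    have hcq := mul_nonneg hc0 (hq0 a)
    have excess_le : (p a - c * q a) * f a ≤ (p a - c * q a) * hi := by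
      rcases eq_or_ne (p a) 0 with hpa | hpa
      · simp [hpa, le_antisymm (hpa ▸ hqp a) hcq]
      · exact mul_le_mul_of_nonneg_left (hf a hpa) (sub_nonneg.2 (hqp a))
    have common_le : c * q a * (f a - g a) ≤ c * q a * D := by
      rcases hcq.eq_or_lt with h0 | hpos
      · simp [← h0]
      · exact mul_le_mul_of_nonneg_left
          (hfg a (hpos.trans_le (hqp a)).ne' (right_ne_zero_of_mul hpos.ne')) hcq
    have le_rest : (1 - c) * q a * lo ≤ (1 - c) * q a * g a := by
      rcases eq_or_ne (q a) 0 with hqa | hqa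
      · simp [hqa]
      · exact mul_le_mul_of_nonneg_left (hg a hqa) (mul_nonneg (sub_nonneg.2 hc1) (hq0 a))
    linarith
  calc F - G ≤ (1 - c * 1) * hi + c * 1 * D - (1 - c) * 1 * lo :=
        hasSum_le hterm (hF.sub hG) ((((hp.sub (hq.mul_left c)).mul_right hi).add
          ((hq.mul_left c).mul_right D)).sub ((hq.mul_left (1 - c)).mul_right lo))
    _ = (1 - c) * (hi - lo) + c * D := by ring

end Coupling

section ShiftSpace

variable {W : ℕ → Set ℕ} {A : ℕ → ℕ → ℕ → Prop} {k j : ℕ} {x y : Seq}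

lemma cons_mem_Sig_iff (hx : x ∈ Sig W A (k + 1)) (a : ℕ) :
    cons a x ∈ Sig W A k ↔ a ∈ W k ∧ A k a (x 0) := by
  refine ⟨fun h => ⟨h.1 0, h.2 0⟩, fun h => ⟨?_, ?_⟩⟩ <;> rintro (_ | i)
  · exact h.1
  · exact Nat.add_right_comm k 1 i ▸ hx.1 i
  · exact h.2
  · exact Nat.add_right_comm k 1 i ▸ hx.2 i

lemma shift_iterate_apply (m : ℕ) (x : Seq) (i : ℕ) : shift^[m] x i = x (m + i) := by
  induction m generalizing x with
  | zero => simp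
  | succ m ih => rw [Function.iterate_succ_apply, ih, shift, add_right_comm]

lemma shift_iterate_mem_Sig (hx : x ∈ Sig W A k) (m : ℕ) : shift^[m] x ∈ Sig W A (k + m) := by
  refine ⟨fun i => ?_, fun i => ?_⟩ <;> simp only [shift_iterate_apply, add_assoc]
  · exact hx.1 (m + i)
  · exact hx.2 (m + i)

lemma prepend_zero (w : ℕ → ℕ) (x : Seq) : prepend w 0 x = x := by
  ext i
  simp [prepend]

lemma prepend_succ (w : ℕ → ℕ) (m : ℕ) (x : Seq) :
    prepend w (m + 1) x = prepend w m (cons (w m) x) := by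
  ext i
  rcases lt_trichotomy i m with h | rfl | h
  · simp [prepend, h, h.trans (Nat.lt_succ_self m)]
  · simp [prepend, cons]
  · obtain ⟨c, rfl⟩ := Nat.exists_eq_add_of_lt h
    simp [prepend, cons, show m + c + 1 - m = c + 1 by omega, show ¬ m + c + 1 < m by omega]

lemma shift_iterate_prepend (w : ℕ → ℕ) (m : ℕ) (x : Seq) : shift^[m] (prepend w m x) = x := by
  ext i
  simp [shift_iterate_apply, prepend]

lemma birkhoff_prepend_succ (φ : ℕ → Seq → ℝ) (k m : ℕ) (w : ℕ → ℕ) (x : Seq) :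
    birkhoff φ k (m + 1) (prepend w (m + 1) x) =
      φ (k + m) (cons (w m) x) + birkhoff φ k m (prepend w m (cons (w m) x)) := by
  rw [prepend_succ, birkhoff, Finset.sum_range_succ, shift_iterate_prepend, add_comm, birkhoff]

lemma agrees.cons (h : agrees x y j) (a : ℕ) : agrees (cons a x) (cons a y) (j + 1) := by
  rintro (_ | i) hi
  · rfl
  · exact h i (Nat.lt_of_succ_lt_succ hi)

end ShiftSpace

section Metric

variable {r α : ℝ} {x y : Seq}

lemma dr_comm (r : ℝ) (x y : Seq) : dr r x y = dr r y x := by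
  rcases eq_or_ne x y with rfl | h
  · rfl
  · simp only [dr, if_neg h, if_neg h.symm, ne_comm]

lemma dr_nonneg (hr0 : 0 ≤ r) (x y : Seq) : 0 ≤ dr r x y := by
  unfold dr
  split_ifs <;> positivity

lemma exists_dr_eq_pow (r : ℝ) (h : x ≠ y) : ∃ j, dr r x y = r ^ j ∧ agrees x y j :=
  ⟨sInf {i | x i ≠ y i}, by simp [dr, h], fun _ hi => not_not.1 (Nat.notMem_of_lt_sInf hi)⟩

lemma dr_le_pow_of_agrees (hr0 : 0 ≤ r) (hr1 : r ≤ 1) {j : ℕ} (h : agrees x y j) :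
    dr r x y ≤ r ^ j := by
  unfold dr
  split_ifs with hxy
  · positivity
  · refine pow_le_pow_of_le_one hr0 hr1 (le_csInf (Function.ne_iff.1 hxy) fun i hi => ?_)
    exact not_lt.1 fun hij => hi (h i hij)

/-- The metric `min {1, α d_r}` with an arbitrary scale `α`; the metric `d̄_k` of
`HstarSystem.dbar` is the case `α = α_k`. -/
noncomputable def truncDist (α r : ℝ) (x y : Seq) : ℝ := min 1 (α * dr r x y)

lemma truncDist_comm (α r : ℝ) (x y : Seq) : truncDist α r x y = truncDist α r y x := by
  rw [truncDist, truncDist, dr_comm]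

lemma truncDist_nonneg (hα : 0 ≤ α) (hr0 : 0 ≤ r) (x y : Seq) : 0 ≤ truncDist α r x y :=
  le_min zero_le_one (mul_nonneg hα (dr_nonneg hr0 x y))

lemma truncDist_le_of_agrees (hα : 0 ≤ α) (hr0 : 0 ≤ r) (hr1 : r ≤ 1) {j : ℕ}
    (h : agrees x y j) : truncDist α r x y ≤ α * r ^ j :=
  (min_le_right _ _).trans (mul_le_mul_of_nonneg_left (dr_le_pow_of_agrees hr0 hr1 h) hα)

lemma truncDist_eq_one_or_exists_agrees (hα : 1 ≤ α) (r : ℝ) (h : x ≠ y) :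
    truncDist α r x y = 1 ∨ ∃ j, 1 ≤ j ∧ truncDist α r x y = α * r ^ j ∧ agrees x y j := by
  obtain ⟨j, hj, hagree⟩ := exists_dr_eq_pow r h
  rw [truncDist, hj]
  rcases le_total 1 (α * r ^ j) with h1 | h1
  · exact .inl (min_eq_left h1)
  rcases j with _ | j
  · exact .inl (min_eq_left (by simpa using hα))
  · exact .inr ⟨j + 1, Nat.le_add_left 1 j, min_eq_right h1, hagree⟩

end Metric

section LipschitzConstant

variable {s : Set Seq} {d : Seq → Seq → ℝ} {f : Seq → ℝ}

lemma LipC_nonneg (s : Set Seq) (d : Seq → Seq → ℝ) (f : Seq → ℝ) : 0 ≤ LipC s d f :=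
  Real.sInf_nonneg fun _ hK => hK.1

lemma LipC_le {K : ℝ} (hK : 0 ≤ K) (h : ∀ x ∈ s, ∀ y ∈ s, |f x - f y| ≤ K * d x y) :
    LipC s d f ≤ K :=
  csInf_le ⟨0, fun _ hK => hK.1⟩ ⟨hK, h⟩

lemma abs_sub_le_LipC_mul {x y : Seq}
    (hf : ∃ K, 0 ≤ K ∧ ∀ x ∈ s, ∀ y ∈ s, |f x - f y| ≤ K * d x y) (hd : 0 ≤ d x y)
    (hx : x ∈ s) (hy : y ∈ s) : |f x - f y| ≤ LipC s d f * d x y := by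
  rcases hd.eq_or_lt with h0 | hpos
  · obtain ⟨K, -, hK⟩ := hf
    simpa [← h0] using hK x hx y hy
  · rw [← div_le_iff₀ hpos]
    exact le_csInf hf fun K hK => (div_le_iff₀ hpos).2 (hK.2 x hx y hy)

lemma HolderOn.exists_forall_abs_sub_le_mul_truncDist {r α κ M : ℝ} (hr0 : 0 ≤ r) (hα : 1 ≤ α)
    (hf : HolderOn s r κ 1 f) (hM : ∀ x ∈ s, |f x| ≤ M) :
    ∃ K, 0 ≤ K ∧ ∀ x ∈ s, ∀ y ∈ s, |f x - f y| ≤ K * truncDist α r x y := by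
  have hK : 0 ≤ max (2 * M) |κ| := (abs_nonneg κ).trans (le_max_right _ _)
  refine ⟨max (2 * M) |κ|, hK, fun x hx y hy => ?_⟩
  rcases eq_or_ne x y with rfl | hxy
  · simpa using mul_nonneg hK (truncDist_nonneg (zero_le_one.trans hα) hr0 x x)
  rcases truncDist_eq_one_or_exists_agrees hα r hxy with h1 | ⟨j, hj, hd, hagree⟩
  · rw [h1, mul_one]
    refine le_max_of_le_left ?_
    linarith [abs_sub (f x) (f y), hM x hx, hM y hy]
  · have hrj : 0 ≤ r ^ j := pow_nonneg hr0 j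
    calc |f x - f y| ≤ κ * r ^ j := hf j hj x hx y hy hagree
      _ ≤ max (2 * M) |κ| * (α * r ^ j) :=
        mul_le_mul ((le_abs_self κ).trans (le_max_right _ _)) (le_mul_of_one_le_left hrj hα) hrj hK
      _ = max (2 * M) |κ| * truncDist α r x y := by rw [hd]

end LipschitzConstant

section Distortion

variable {κ : ℕ → ℝ} {r : ℝ}

lemma logB_succ (κ : ℕ → ℝ) (r : ℝ) (m : ℕ) : logB κ r (m + 1) = r * (κ m + logB κ r m) := by
  have h (m : ℕ) : logB κ r m = ∑ i ∈ Finset.range m, κ (m - (i + 1)) * r ^ (i + 1) := by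
    rw [Finset.range_eq_Ico, Finset.sum_Ico_add' (fun i => κ (m - i) * r ^ i) 0 m 1]
    rfl
  rw [h, h, Finset.sum_range_succ', mul_add, Finset.mul_sum, add_comm]
  congr 1
  · simp [mul_comm]
  · refine Finset.sum_congr rfl fun i _ => ?_
    rw [Nat.add_sub_add_right]
    ring

lemma logB_nonneg (hr0 : 0 ≤ r) (hκ : ∀ n, 0 ≤ κ n) (m : ℕ) : 0 ≤ logB κ r m :=
  Finset.sum_nonneg fun _ _ => mul_nonneg (hκ _) (pow_nonneg hr0 _)

lemma one_le_Bconst_div {β : ℝ} (hr0 : 0 ≤ r) (hκ : ∀ n, 0 ≤ κ n) (hβ0 : 0 < β) (hβ1 : β ≤ 1)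
    (m : ℕ) : 1 ≤ Bconst κ r m / β :=
  (one_le_div hβ0).2 (hβ1.trans (Real.one_le_exp (logB_nonneg hr0 hκ m)))

lemma one_sub_exp_neg_mul_add_le {b s : ℝ} (hb : 0 ≤ b) (hs0 : 0 ≤ s) (hs1 : s ≤ 1) :
    1 - Real.exp (-(b * s)) + Real.exp (-(b * s)) * s ≤ Real.exp b * s :=
  calc 1 - Real.exp (-(b * s)) + Real.exp (-(b * s)) * s
      = 1 - Real.exp (-(b * s)) * (1 - s) := by ring
    _ ≤ 1 - (-(b * s) + 1) * (1 - s) := by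
      gcongr
      exact Real.add_one_le_exp _
    _ = (b + 1) * s - b * s ^ 2 := by ring
    _ ≤ (b + 1) * s := sub_le_self _ (by positivity)
    _ ≤ Real.exp b * s := by
      gcongr
      exact Real.add_one_le_exp b

end Distortion

section TransferOperator

variable {W : ℕ → Set ℕ} {A : ℕ → ℕ → ℕ → Prop} {φ : ℕ → Seq → ℝ} {k : ℕ} {f : Seq → ℝ}
  {lo hi : ℝ} {x y : Seq}

/-- The potentials are normalized: `ℒ_k(1) = 1` on `Σ_{k+1}` for every `k`. -/
def IsNormalized (W : ℕ → Set ℕ) (A : ℕ → ℕ → ℕ → Prop) (φ : ℕ → Seq → ℝ) : Prop :=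
  ∀ k, ∀ x ∈ Sig W A (k + 1), Ruelle W A φ k (fun _ => 1) x = 1

/-- The weight `e^{φ_k(ax)}` that `ℒ_k` gives to the preimage `ax` of `x`, set to `0` for the
letters `a` with `ax ∉ Σ_k`, so that `ℒ_k` becomes a sum over all letters. -/
noncomputable def branchWeight (W : ℕ → Set ℕ) (A : ℕ → ℕ → ℕ → Prop) (φ : ℕ → Seq → ℝ)
    (k : ℕ) (x : Seq) (a : ℕ) : ℝ :=
  (Sig W A k).indicator (fun y => Real.exp (φ k y)) (cons a x)

lemma branchWeight_of_mem {a : ℕ} (h : cons a x ∈ Sig W A k) :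
    branchWeight W A φ k x a = Real.exp (φ k (cons a x)) :=
  indicator_of_mem h _

lemma cons_mem_Sig_of_branchWeight_ne_zero {a : ℕ} (h : branchWeight W A φ k x a ≠ 0) :
    cons a x ∈ Sig W A k :=
  mem_of_indicator_ne_zero h

lemma branchWeight_nonneg (a : ℕ) : 0 ≤ branchWeight W A φ k x a :=
  indicator_nonneg (fun _ _ => (Real.exp_pos _).le) _

lemma Ruelle_eq_tsum (k : ℕ) (f : Seq → ℝ) (x : Seq) :
    Ruelle W A φ k f x = ∑' a, branchWeight W A φ k x a * f (cons a x) := by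
  refine tsum_congr fun a => ?_
  by_cases h : cons a x ∈ Sig W A k <;> simp [branchWeight, h]

lemma IsNormalized.hasSum_branchWeight (hφ : IsNormalized W A φ) (hx : x ∈ Sig W A (k + 1)) :
    HasSum (branchWeight W A φ k x) 1 := by
  have h : ∑' a, branchWeight W A φ k x a = 1 := by
    simpa only [Ruelle_eq_tsum, mul_one] using hφ k x hx
  have hs : Summable (branchWeight W A φ k x) := by
    by_contra hs
    exact zero_ne_one ((tsum_eq_zero_of_not_summable hs).symm.trans h)
  exact h ▸ hs.hasSum

lemma IsNormalized.hasSum_Ruelle (hφ : IsNormalized W A φ)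
    (hf : MapsTo f (Sig W A k) (Icc lo hi)) (hx : x ∈ Sig W A (k + 1)) :
    HasSum (fun a => branchWeight W A φ k x a * f (cons a x)) (Ruelle W A φ k f x) := by
  rw [Ruelle_eq_tsum]
  refine (((hφ.hasSum_branchWeight hx).summable.mul_right (max |lo| |hi|)).of_norm_bounded
    fun a => ?_).hasSum
  rw [norm_mul, Real.norm_of_nonneg (branchWeight_nonneg a)]
  rcases eq_or_ne (branchWeight W A φ k x a) 0 with h0 | hne
  · simp [h0]
  · have hfa := hf (cons_mem_Sig_of_branchWeight_ne_zero hne)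
    exact mul_le_mul_of_nonneg_left (abs_le_max_abs_abs hfa.1 hfa.2) (branchWeight_nonneg a)

lemma IsNormalized.mapsTo_Ruelle (hφ : IsNormalized W A φ)
    (hf : MapsTo f (Sig W A k) (Icc lo hi)) :
    MapsTo (Ruelle W A φ k f) (Sig W A (k + 1)) (Icc lo hi) := by
  intro x hx
  have hsum := hφ.hasSum_Ruelle hf hx
  have hmem (a : ℕ) : branchWeight W A φ k x a * lo ≤ branchWeight W A φ k x a * f (cons a x) ∧
      branchWeight W A φ k x a * f (cons a x) ≤ branchWeight W A φ k x a * hi := by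
    rcases eq_or_ne (branchWeight W A φ k x a) 0 with h0 | hne
    · simp [h0]
    · have hfa := hf (cons_mem_Sig_of_branchWeight_ne_zero hne)
      exact ⟨mul_le_mul_of_nonneg_left hfa.1 (branchWeight_nonneg a),
        mul_le_mul_of_nonneg_left hfa.2 (branchWeight_nonneg a)⟩
  constructor
  · simpa only [one_mul] using
      hasSum_le (fun a => (hmem a).1) ((hφ.hasSum_branchWeight hx).mul_right lo) hsum
  · simpa only [one_mul] using
      hasSum_le (fun a => (hmem a).2) hsum ((hφ.hasSum_branchWeight hx).mul_right hi)

lemma RuelleIter_succ (k n : ℕ) (f : Seq → ℝ) :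
    RuelleIter W A φ k (n + 1) f = Ruelle W A φ (k + n) (RuelleIter W A φ k n f) :=
  rfl

lemma IsNormalized.mapsTo_RuelleIter (hφ : IsNormalized W A φ)
    (hf : MapsTo f (Sig W A k) (Icc lo hi)) (n : ℕ) :
    MapsTo (RuelleIter W A φ k n f) (Sig W A (k + n)) (Icc lo hi) := by
  induction n with
  | zero => exact hf
  | succ n ih => exact hφ.mapsTo_Ruelle ih

lemma RuelleIter_add (k n m : ℕ) (f : Seq → ℝ) :
    RuelleIter W A φ k (n + m) f = RuelleIter W A φ (k + n) m (RuelleIter W A φ k n f) := by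
  induction m with
  | zero => rfl
  | succ m ih => rw [← Nat.add_assoc n m 1, RuelleIter_succ, RuelleIter_succ, ih, Nat.add_assoc]

lemma Ruelle_neg (k : ℕ) (f : Seq → ℝ) : Ruelle W A φ k (-f) = -Ruelle W A φ k f := by
  ext x
  simp [Ruelle_eq_tsum, tsum_neg]

lemma RuelleIter_neg (k n : ℕ) (f : Seq → ℝ) :
    RuelleIter W A φ k n (-f) = -RuelleIter W A φ k n f := by
  induction n with
  | zero => rfl
  | succ n ih => rw [RuelleIter_succ, RuelleIter_succ, ih, Ruelle_neg]

lemma IsNormalized.exp_mul_sub_le_Ruelle_sub (hφ : IsNormalized W A φ)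
    (hf : MapsTo f (Sig W A k) (Icc lo hi)) (hx : x ∈ Sig W A (k + 1)) {a : ℕ}
    (ha : cons a x ∈ Sig W A k) :
    Real.exp (φ k (cons a x)) * (f (cons a x) - lo) ≤ Ruelle W A φ k f x - lo := by
  have hsum : HasSum (fun a => branchWeight W A φ k x a * (f (cons a x) - lo))
      (Ruelle W A φ k f x - lo) := by
    simpa only [mul_sub, one_mul] using
      (hφ.hasSum_Ruelle hf hx).sub ((hφ.hasSum_branchWeight hx).mul_right lo)
  rw [← branchWeight_of_mem ha]
  refine le_hasSum hsum a fun b _ => ?_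
  rcases eq_or_ne (branchWeight W A φ k x b) 0 with h0 | hne
  · simp [h0]
  · exact mul_nonneg (branchWeight_nonneg b)
      (sub_nonneg.2 (hf (cons_mem_Sig_of_branchWeight_ne_zero hne)).1)

lemma IsNormalized.exp_birkhoff_mul_sub_le_RuelleIter_sub (hφ : IsNormalized W A φ)
    (hf : MapsTo f (Sig W A k) (Icc lo hi)) (w : ℕ → ℕ) (m : ℕ) (hx : x ∈ Sig W A (k + m))
    (hw : prepend w m x ∈ Sig W A k) :
    Real.exp (birkhoff φ k m (prepend w m x)) * (f (prepend w m x) - lo) ≤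
      RuelleIter W A φ k m f x - lo := by
  induction m generalizing x with
  | zero => simp [prepend_zero, birkhoff, RuelleIter]
  | succ m ih =>
    rw [birkhoff_prepend_succ, Real.exp_add, mul_assoc]
    rw [prepend_succ] at hw ⊢
    have hcons : cons (w m) x ∈ Sig W A (k + m) := by
      simpa only [shift_iterate_prepend] using shift_iterate_mem_Sig hw m
    calc _ ≤ Real.exp (φ (k + m) (cons (w m) x)) *
            (RuelleIter W A φ k m f (cons (w m) x) - lo) := by
          gcongr
          exact ih hcons hw
      _ ≤ RuelleIter W A φ k (m + 1) f x - lo :=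
          hφ.exp_mul_sub_le_Ruelle_sub (hφ.mapsTo_RuelleIter hf m) hx hcons

lemma IsNormalized.exp_birkhoff_mul_sub_le_sub_RuelleIter (hφ : IsNormalized W A φ)
    (hf : MapsTo f (Sig W A k) (Icc lo hi)) (w : ℕ → ℕ) (m : ℕ) (hx : x ∈ Sig W A (k + m))
    (hw : prepend w m x ∈ Sig W A k) :
    Real.exp (birkhoff φ k m (prepend w m x)) * (hi - f (prepend w m x)) ≤
      hi - RuelleIter W A φ k m f x := by
  have hneg : MapsTo (-f) (Sig W A k) (Icc (-hi) (-lo)) := fun z hz =>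
    ⟨neg_le_neg (hf hz).2, neg_le_neg (hf hz).1⟩
  simpa [RuelleIter_neg, neg_add_eq_sub] using
    hφ.exp_birkhoff_mul_sub_le_RuelleIter_sub hneg w m hx hw

lemma IsNormalized.RuelleIter_sub_le_of_exp_birkhoff_ge (hφ : IsNormalized W A φ)
    (hf : MapsTo f (Sig W A k) (Icc lo hi)) {v w : ℕ → ℕ} {m : ℕ} {C D : ℝ} (hC : 0 ≤ C)
    (hx : x ∈ Sig W A (k + m)) (hy : y ∈ Sig W A (k + m))
    (hv : prepend v m x ∈ Sig W A k) (hw : prepend w m y ∈ Sig W A k)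
    (hCv : C ≤ Real.exp (birkhoff φ k m (prepend v m x)))
    (hCw : C ≤ Real.exp (birkhoff φ k m (prepend w m y)))
    (hD : f (prepend v m x) - f (prepend w m y) ≤ D) :
    RuelleIter W A φ k m f x - RuelleIter W A φ k m f y ≤ (1 - C) * (hi - lo) + C * D := by
  have upper : C * (hi - f (prepend v m x)) ≤ hi - RuelleIter W A φ k m f x :=
    (mul_le_mul_of_nonneg_right hCv (sub_nonneg.2 (hf hv).2)).trans
      (hφ.exp_birkhoff_mul_sub_le_sub_RuelleIter hf v m hx hv)
  have lower : C * (f (prepend w m y) - lo) ≤ RuelleIter W A φ k m f y - lo :=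
    (mul_le_mul_of_nonneg_right hCw (sub_nonneg.2 (hf hw).1)).trans
      (hφ.exp_birkhoff_mul_sub_le_RuelleIter_sub hf w m hy hw)
  linarith [mul_le_mul_of_nonneg_left hD hC]

lemma IsNormalized.Ruelle_sub_le (hφ : IsNormalized W A φ)
    (hf : MapsTo f (Sig W A k) (Icc lo hi)) {δ D : ℝ}
    (hx : x ∈ Sig W A (k + 1)) (hy : y ∈ Sig W A (k + 1)) (hxy : x 0 = y 0)
    (hδ : ∀ a, cons a x ∈ Sig W A k → cons a y ∈ Sig W A k →
      φ k (cons a y) - φ k (cons a x) ≤ δ)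
    (hD : ∀ a, cons a x ∈ Sig W A k → cons a y ∈ Sig W A k → f (cons a x) - f (cons a y) ≤ D) :
    Ruelle W A φ k f x - Ruelle W A φ k f y ≤
      (1 - Real.exp (-δ)) * (hi - lo) + Real.exp (-δ) * D := by
  have hle (a : ℕ) : Real.exp (-δ) * branchWeight W A φ k y a ≤ branchWeight W A φ k x a := by
    rcases eq_or_ne (branchWeight W A φ k y a) 0 with h0 | hne
    · simpa [h0] using branchWeight_nonneg a
    have hay := cons_mem_Sig_of_branchWeight_ne_zero hne
    have hax : cons a x ∈ Sig W A k := by rwa [cons_mem_Sig_iff hx, hxy, ← cons_mem_Sig_iff hy]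
    rw [branchWeight_of_mem hax, branchWeight_of_mem hay, ← Real.exp_add, Real.exp_le_exp]
    linarith [hδ a hax hay]
  exact hasSum_sub_le_of_mul_le (hφ.hasSum_branchWeight hx) (hφ.hasSum_branchWeight hy)
    branchWeight_nonneg (Real.exp_pos _).le hle (hφ.hasSum_Ruelle hf hx) (hφ.hasSum_Ruelle hf hy)
    (fun a ha => (hf (cons_mem_Sig_of_branchWeight_ne_zero ha)).2)
    (fun a ha => (hf (cons_mem_Sig_of_branchWeight_ne_zero ha)).1)
    fun a hax hay => hD a (cons_mem_Sig_of_branchWeight_ne_zero hax)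
      (cons_mem_Sig_of_branchWeight_ne_zero hay)

end TransferOperator

section Contraction

variable {W : ℕ → Set ℕ} {A : ℕ → ℕ → ℕ → Prop} {φ : ℕ → Seq → ℝ} {κ : ℕ → ℝ} {r : ℝ} {k : ℕ}
  {f : Seq → ℝ} {x y : Seq}

lemma exists_mapsTo_Icc_of_abs_sub_le_mul_truncDist {s : Set Seq} {α L : ℝ} (hL : 0 ≤ L)
    (hf : ∀ z ∈ s, ∀ z' ∈ s, |f z - f z'| ≤ L * truncDist α r z z') :
    ∃ lo, MapsTo f s (Icc lo (lo + L)) :=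
  exists_mapsTo_Icc_of_forall_sub_le fun z hz z' hz' => (le_abs_self _).trans
    ((hf z hz z' hz').trans (mul_le_of_le_one_right hL (min_le_left _ _)))

lemma sub_le_mul_pow_of_agrees (hr0 : 0 ≤ r) (hr1 : r ≤ 1) {s : Set Seq} {α L : ℝ} (hα : 0 ≤ α)
    (hL : 0 ≤ L) (hf : ∀ z ∈ s, ∀ z' ∈ s, |f z - f z'| ≤ L * truncDist α r z z')
    (hx : x ∈ s) (hy : y ∈ s) {j : ℕ} (hxy : agrees x y j) : f x - f y ≤ L * (α * r ^ j) :=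
  (le_abs_self _).trans ((hf x hx y hy).trans
    (mul_le_mul_of_nonneg_left (truncDist_le_of_agrees hα hr0 hr1 hxy) hL))

lemma IsNormalized.RuelleIter_sub_le_of_agrees (hφ : IsNormalized W A φ) (hr0 : 0 ≤ r)
    (hκ : ∀ i, 0 ≤ κ i) (hHolder : ∀ i, HolderOn (Sig W A i) r (κ i) 2 (φ i)) {lo hi D : ℝ}
    (hf : MapsTo f (Sig W A k) (Icc lo hi)) (hD : D ≤ hi - lo) {n j : ℕ} (hj : 1 ≤ j)
    (hosc : ∀ z ∈ Sig W A k, ∀ z' ∈ Sig W A k, agrees z z' (n + j) → f z - f z' ≤ D)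
    (hx : x ∈ Sig W A (k + n)) (hy : y ∈ Sig W A (k + n)) (hxy : agrees x y j) :
    RuelleIter W A φ k n f x - RuelleIter W A φ k n f y ≤
      (1 - Real.exp (-(logB κ r (k + n) * r ^ j))) * (hi - lo) +
        Real.exp (-(logB κ r (k + n) * r ^ j)) * D := by
  induction n generalizing j x y with
  | zero =>
    have hexp : Real.exp (-(logB κ r k * r ^ j)) ≤ 1 := Real.exp_le_one_iff.2
      (neg_nonpos.2 (mul_nonneg (logB_nonneg hr0 hκ k) (pow_nonneg hr0 j)))
    have hfxy : f x - f y ≤ D := hosc x hx y hy (by rwa [zero_add])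
    simp only [RuelleIter, add_zero]
    linarith [mul_le_mul_of_nonneg_left hD (sub_nonneg.2 hexp)]
  | succ n ih =>
    have hexp : Real.exp (-(logB κ r (k + (n + 1)) * r ^ j)) =
        Real.exp (-(κ (k + n) * r ^ (j + 1))) * Real.exp (-(logB κ r (k + n) * r ^ (j + 1))) := by
      rw [← Nat.add_assoc, logB_succ, ← Real.exp_add]
      ring_nf
    rw [Nat.add_right_comm n 1 j] at hosc
    have hstep := hφ.Ruelle_sub_le (hφ.mapsTo_RuelleIter hf n) hx hy (hxy 0 hj)
      (fun a hax hay => (abs_sub_le_iff.1 (hHolder (k + n) (j + 1) (Nat.succ_le_succ hj)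
        _ hax _ hay (hxy.cons a))).2)
      (fun a hax hay => ih (Nat.le_add_left 1 j) hosc hax hay (hxy.cons a))
    rw [hexp]
    exact hstep.trans_eq (by ring)

lemma IsNormalized.RuelleIter_sub_le_mul_Bconst_mul_pow (hφ : IsNormalized W A φ)
    (hr0 : 0 ≤ r) (hr1 : r ≤ 1) (hκ : ∀ i, 0 ≤ κ i)
    (hHolder : ∀ i, HolderOn (Sig W A i) r (κ i) 2 (φ i)) {α L : ℝ} (hα : 0 ≤ α) (hL : 0 ≤ L)
    (hf : ∀ z ∈ Sig W A k, ∀ z' ∈ Sig W A k, |f z - f z'| ≤ L * truncDist α r z z')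
    {l j : ℕ} (hl : r ^ l * α ≤ 1) (hj : 1 ≤ j) (hx : x ∈ Sig W A (k + l))
    (hy : y ∈ Sig W A (k + l)) (hxy : agrees x y j) :
    RuelleIter W A φ k l f x - RuelleIter W A φ k l f y ≤ L * (Bconst κ r (k + l) * r ^ j) := by
  obtain ⟨lo, hlo⟩ := exists_mapsTo_Icc_of_abs_sub_le_mul_truncDist hL hf
  have hrj0 : 0 ≤ r ^ j := pow_nonneg hr0 j
  have hrj1 : r ^ j ≤ 1 := pow_le_one₀ hr0 hr1
  have hosc : ∀ z ∈ Sig W A k, ∀ z' ∈ Sig W A k, agrees z z' (l + j) →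
      f z - f z' ≤ L * r ^ j := fun z hz z' hz' hagree =>
    calc f z - f z' ≤ L * (α * r ^ (l + j)) :=
          sub_le_mul_pow_of_agrees hr0 hr1 hα hL hf hz hz' hagree
      _ = L * (r ^ l * α * r ^ j) := by ring
      _ ≤ L * r ^ j := by gcongr; exact mul_le_of_le_one_left hrj0 hl
  calc _ ≤ _ := hφ.RuelleIter_sub_le_of_agrees hr0 hκ hHolder hlo
        (by simpa using mul_le_of_le_one_right hL hrj1) hj hosc hx hy hxy
    _ = L * (1 - Real.exp (-(logB κ r (k + l) * r ^ j)) +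
          Real.exp (-(logB κ r (k + l) * r ^ j)) * r ^ j) := by ring
    _ ≤ L * (Bconst κ r (k + l) * r ^ j) := by
      gcongr
      exact one_sub_exp_neg_mul_add_le (logB_nonneg hr0 hκ _) hrj0 hrj1

lemma IsNormalized.RuelleIter_sub_le_of_agrees_one (hφ : IsNormalized W A φ)
    (hr0 : 0 ≤ r) (hr1 : r ≤ 1) (hκ : ∀ i, 0 ≤ κ i)
    (hHolder : ∀ i, HolderOn (Sig W A i) r (κ i) 2 (φ i)) {α L : ℝ} (hα : 0 ≤ α) (hL : 0 ≤ L)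
    (hf : ∀ z ∈ Sig W A k, ∀ z' ∈ Sig W A k, |f z - f z'| ≤ L * truncDist α r z z')
    {n : ℕ} (hn : r ^ n * α ≤ 1) (hx : x ∈ Sig W A (k + n)) (hy : y ∈ Sig W A (k + n))
    (hxy : agrees x y 1) :
    RuelleIter W A φ k n f x - RuelleIter W A φ k n f y ≤
      (1 - (1 - r ^ n * α) / Bconst κ r (k + n)) * L := by
  obtain ⟨lo, hlo⟩ := exists_mapsTo_Icc_of_abs_sub_le_mul_truncDist hL hf
  have hosc : ∀ z ∈ Sig W A k, ∀ z' ∈ Sig W A k, agrees z z' (n + 1) →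
      f z - f z' ≤ L * (r ^ n * α) := fun z hz z' hz' hagree =>
    calc f z - f z' ≤ L * (α * r ^ (n + 1)) :=
          sub_le_mul_pow_of_agrees hr0 hr1 hα hL hf hz hz' hagree
      _ = L * (r ^ n * α * r) := by ring
      _ ≤ L * (r ^ n * α) :=
          mul_le_mul_of_nonneg_left (mul_le_of_le_one_right (by positivity) hr1) hL
  have hexp : (Bconst κ r (k + n))⁻¹ ≤ Real.exp (-(logB κ r (k + n) * r ^ 1)) := by
    rw [Bconst, ← Real.exp_neg, pow_one, Real.exp_le_exp, neg_le_neg_iff]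
    exact mul_le_of_le_one_right (logB_nonneg hr0 hκ _) hr1
  calc _ ≤ _ := hφ.RuelleIter_sub_le_of_agrees hr0 hκ hHolder hlo
        (by simpa using mul_le_of_le_one_right hL hn) le_rfl hosc hx hy hxy
    _ = (1 - (1 - r ^ n * α) * Real.exp (-(logB κ r (k + n) * r ^ 1))) * L := by ring
    _ ≤ (1 - (1 - r ^ n * α) / Bconst κ r (k + n)) * L := by
      rw [div_eq_mul_inv]
      gcongr

lemma IsNormalized.RuelleIter_sub_le_of_common_letter (hφ : IsNormalized W A φ)
    (hr0 : 0 ≤ r) (hr1 : r ≤ 1) (hκ : ∀ i, 0 ≤ κ i)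
    (hHolder : ∀ i, HolderOn (Sig W A i) r (κ i) 2 (φ i)) {α L : ℝ} (hα : 0 ≤ α) (hL : 0 ≤ L)
    (hf : ∀ z ∈ Sig W A k, ∀ z' ∈ Sig W A k, |f z - f z'| ≤ L * truncDist α r z z')
    {n m : ℕ} (hn : r ^ n * α ≤ 1) (hm : 1 ≤ m) {v w : ℕ → ℕ} (hvw : v 0 = w 0)
    {C : ℝ} (hC : 0 ≤ C) (hx : x ∈ Sig W A (k + n + m)) (hy : y ∈ Sig W A (k + n + m))
    (hv : prepend v m x ∈ Sig W A (k + n)) (hw : prepend w m y ∈ Sig W A (k + n))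
    (hCv : C ≤ Real.exp (birkhoff φ (k + n) m (prepend v m x)))
    (hCw : C ≤ Real.exp (birkhoff φ (k + n) m (prepend w m y))) :
    RuelleIter W A φ k (n + m) f x - RuelleIter W A φ k (n + m) f y ≤
      (1 - (1 - r ^ n * α) * C / Bconst κ r (k + n)) * L := by
  obtain ⟨lo, hlo⟩ := exists_mapsTo_Icc_of_abs_sub_le_mul_truncDist hL hf
  have hagree : agrees (prepend v m x) (prepend w m y) 1 := fun i hi => by
    have hi0 : i = 0 := Nat.lt_one_iff.1 hi
    simp only [hi0, prepend, if_pos (show 0 < m from hm), hvw]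
  rw [RuelleIter_add]
  calc _ ≤ _ := hφ.RuelleIter_sub_le_of_exp_birkhoff_ge (hφ.mapsTo_RuelleIter hlo n) hC hx hy hv hw
        hCv hCw (hφ.RuelleIter_sub_le_of_agrees_one hr0 hr1 hκ hHolder hα hL hf hn hv hw hagree)
    _ = (1 - (1 - r ^ n * α) * C / Bconst κ r (k + n)) * L := by ring

lemma IsNormalized.RuelleIter_sub_le_mul_truncDist (hφ : IsNormalized W A φ)
    (hr0 : 0 ≤ r) (hr1 : r ≤ 1) (hκ : ∀ i, 0 ≤ κ i)
    (hHolder : ∀ i, HolderOn (Sig W A i) r (κ i) 2 (φ i)) {α L : ℝ} (hα : 0 ≤ α) (hL : 0 ≤ L)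
    (hf : ∀ z ∈ Sig W A k, ∀ z' ∈ Sig W A k, |f z - f z'| ≤ L * truncDist α r z z')
    {n m : ℕ} (hn : r ^ n * α ≤ 1) (hm : 1 ≤ m) {u : Seq → Seq} {o : ℕ} {C : ℝ}
    (hu : ∀ x ∈ Sig W A (k + n + m), prepend (u x) m x ∈ Sig W A (k + n) ∧ u x 0 = o)
    (hC0 : 0 ≤ C)
    (hC : ∀ x ∈ Sig W A (k + n + m), C ≤ Real.exp (birkhoff φ (k + n) m (prepend (u x) m x)))
    {β : ℝ} (hβ0 : 0 < β) (hβ1 : β ≤ 1)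
    (hx : x ∈ Sig W A (k + (n + m))) (hy : y ∈ Sig W A (k + (n + m))) :
    RuelleIter W A φ k (n + m) f x - RuelleIter W A φ k (n + m) f y ≤
      max β (1 - (1 - r ^ n * α) * C / Bconst κ r (k + n)) * L *
        truncDist (Bconst κ r (k + (n + m)) / β) r x y := by
  have hα' := one_le_Bconst_div hr0 hκ hβ0 hβ1 (k + (n + m))
  have hα'0 := zero_le_one.trans hα'
  rcases eq_or_ne x y with rfl | hxy
  · simpa using mul_nonneg (mul_nonneg (hβ0.le.trans (le_max_left _ _)) hL)
      (truncDist_nonneg hα'0 hr0 x x)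
  rcases truncDist_eq_one_or_exists_agrees hα' r hxy with
    hd | ⟨j, hj, hd, hagree⟩ <;> rw [hd]
  · rw [← add_assoc] at hx hy
    rw [mul_one]
    exact (hφ.RuelleIter_sub_le_of_common_letter hr0 hr1 hκ hHolder hα hL hf hn hm
      ((hu x hx).2.trans (hu y hy).2.symm) hC0 hx hy (hu x hx).1 (hu y hy).1 (hC x hx)
      (hC y hy)).trans (mul_le_mul_of_nonneg_right (le_max_right _ _) hL)
  · have hl : r ^ (n + m) * α ≤ 1 := (mul_le_mul_of_nonneg_right
      (pow_le_pow_of_le_one hr0 hr1 (Nat.le_add_right n m)) hα).trans hn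
    calc _ ≤ L * (Bconst κ r (k + (n + m)) * r ^ j) :=
          hφ.RuelleIter_sub_le_mul_Bconst_mul_pow hr0 hr1 hκ hHolder hα hL hf hl hj hx hy hagree
      _ = β * L * (Bconst κ r (k + (n + m)) / β * r ^ j) := by field_simp
      _ ≤ _ * L * (Bconst κ r (k + (n + m)) / β * r ^ j) := by
        gcongr
        exact le_max_left _ _

theorem ruelle_iter_lipschitz_contraction_general {β : ℝ} (hr0 : 0 ≤ r) (hr1 : r ≤ 1)
    (hβ0 : 0 < β) (hβ1 : β < 1) (hκ : ∀ i, 0 ≤ κ i) (hφ : IsNormalized W A φ)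
    (hHolder : ∀ i, HolderOn (Sig W A i) r (κ i) 2 (φ i))
    {n m o : ℕ} (hn : r ^ n * (Bconst κ r k / β) < 1) (hm : 1 ≤ m) {u : Seq → Seq} {C : ℝ}
    (hu : ∀ x ∈ Sig W A (k + n + m), prepend (u x) m x ∈ Sig W A (k + n) ∧ u x 0 = o)
    (hC0 : 0 < C)
    (hC : ∀ x ∈ Sig W A (k + n + m), C ≤ Real.exp (birkhoff φ (k + n) m (prepend (u x) m x)))
    {κf Mf : ℝ} (hf : HolderOn (Sig W A k) r κf 1 f) (hMf : ∀ x ∈ Sig W A k, |f x| ≤ Mf) :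
    let t := max β (1 - (1 - r ^ n * (Bconst κ r k / β)) * C / Bconst κ r (k + n))
    0 < t ∧ t < 1 ∧
      LipC (Sig W A (k + (n + m))) (truncDist (Bconst κ r (k + (n + m)) / β) r)
          (RuelleIter W A φ k (n + m) f) ≤
        t * LipC (Sig W A k) (truncDist (Bconst κ r k / β) r) f := by
  intro t
  have ht0 : 0 < t := lt_max_of_lt_left hβ0
  have ht1 : t < 1 := max_lt hβ1 (sub_lt_self 1
    (div_pos (mul_pos (sub_pos.2 hn) hC0) (Real.exp_pos _)))
  have hα := one_le_Bconst_div hr0 hκ hβ0 hβ1.le k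
  have hα0 := zero_le_one.trans hα
  set L := LipC (Sig W A k) (truncDist (Bconst κ r k / β) r) f
  have hL : 0 ≤ L := LipC_nonneg _ _ _
  have hLip : ∀ z ∈ Sig W A k, ∀ z' ∈ Sig W A k,
      |f z - f z'| ≤ L * truncDist (Bconst κ r k / β) r z z' := fun z hz z' hz' =>
    abs_sub_le_LipC_mul (hf.exists_forall_abs_sub_le_mul_truncDist hr0 hα hMf)
      (truncDist_nonneg hα0 hr0 z z') hz hz'
  have contraction {x y : Seq} (hx : x ∈ Sig W A (k + (n + m))) (hy : y ∈ Sig W A (k + (n + m))) :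
      RuelleIter W A φ k (n + m) f x - RuelleIter W A φ k (n + m) f y ≤
        t * L * truncDist (Bconst κ r (k + (n + m)) / β) r x y :=
    hφ.RuelleIter_sub_le_mul_truncDist hr0 hr1 hκ hHolder hα0 hL hLip hn.le hm hu hC0.le hC hβ0
      hβ1.le hx hy
  exact ⟨ht0, ht1, LipC_le (mul_nonneg ht0.le hL) fun x hx y hy =>
    abs_sub_le_iff.2 ⟨contraction hx hy, truncDist_comm _ r x y ▸ contraction hy hx⟩⟩

end Contraction

namespace HstarSystem

variable (S : HstarSystem)

lemma isNormalized : IsNormalized S.W S.A S.φ := S.normalized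

lemma holderOn_two (n : ℕ) : HolderOn (Sig S.W S.A n) S.r (S.κ n) 2 (S.φ n) := by
  by_cases hn : n ∈ S.K
  · exact fun j hj => S.holder1 n hn j (one_le_two.trans hj)
  · exact S.holder2 n hn

lemma pow_nseq_mul_alphaC_lt_one (k : ℕ) : S.r ^ S.nseq k * S.alphaC k < 1 := by
  have hα : 0 < S.alphaC k := div_pos (Real.exp_pos _) S.hβ.1
  have hpow : 0 < S.r ^ S.nseq k := pow_pos S.hr.1 _
  have hlt : -Real.log (S.alphaC k) / Real.log S.r < S.nseq k :=
    (Int.lt_floor_add_one _).trans_le (mod_cast S.hn k)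
  rw [div_lt_iff_of_neg (Real.log_neg S.hr.1 S.hr.2)] at hlt
  rw [← Real.log_neg_iff (mul_pos hpow hα), Real.log_mul hpow.ne' hα.ne', Real.log_pow]
  linarith

end HstarSystem

/-- (Lemma, part (ii).) Under property `(H*)`, with `l_k = n_k + m_{k+n_k}`,
the Ruelle iterate over `l_k` steps contracts the Lipschitz constant with respect to the
metrics `d̄` by the factor `t_k = max{β, 1 − (1 − r^{n_k} α_k) C_{k+n_k}/B_{k+n_k}} ∈ (0,1)`. -/
theorem ruelle_iter_lipschitz_contraction (S : HstarSystem) (k : ℕ)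
    (f : Seq → ℝ) (κf Mf : ℝ)
    (hf : HolderOn (Sig S.W S.A k) S.r κf 1 f)
    (hMf : ∀ x ∈ Sig S.W S.A k, |f x| ≤ Mf) :
    0 < S.tconst k ∧ S.tconst k < 1 ∧
      LipC (Sig S.W S.A (k + S.lconst k)) (S.dbar (k + S.lconst k))
          (RuelleIter S.W S.A S.φ k (S.lconst k) f) ≤
        S.tconst k * LipC (Sig S.W S.A k) (S.dbar k) f :=
  ruelle_iter_lipschitz_contraction_general S.hr.1.le S.hr.2.le S.hβ.1 S.hβ.2 S.κnonneg
    S.isNormalized S.holderOn_two (S.pow_nseq_mul_alphaC_lt_one k) (S.hm_mem _).1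
    (fun x hx => ⟨(S.hu _ x hx).1, (S.hu _ x hx).2.1⟩) (S.hC_pos _) (S.hC_le _) hf hMf

end NSShift
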